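/- arXiv:1804.11189 — 2 statements merged into one kernel-verified Lean document; each statement's English description precedes it below -/
import Mathlib

section
/- For every integer n ≥ 6, there exists a 6-diagonal magic square of order n with magic sum 3(6n−1) = 18n−3. -/
/-!
Write `C = 6n - 1` and call `x` and `C - x` complementary. On each row the diagonals `0,1`, then
`2,3`, then `4,5` carry complementary entries, so every row sums to `3C = 18n - 3`. Let `f₀ j`,
`f₂ j`, `f₄ j` be the entries of column `j` on the even diagonals. The entry of column `j` on
diagonal `t + 1` is then `C - f_t (j - 1)`, with `j - 1` taken cyclically, so all column sums equal
`3C` as soon as `f₀ + f₂ + f₄` is constant. It remains to pick one number out of each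
complementary pair and to arrange these `3n` numbers in `n` triples of equal sum. The choice
`f₀ j = 4n + j`, `f₂ j = 5n + j`, `f₄ j = 4n - 1 - 2j` does this: the triples sum to `13n - 1`, and
the entries of the six diagonals fill `[4n,5n)`, `[n,2n)`, `[5n,6n)`, `[0,n)`, and the odd and the
even numbers of `[2n,4n)`.

The sums are `sum_entry_col` and `sum_entry_row`; that every number occurs exactly once is
`entry_inj` and `entry_surj`.
-/


/-- An `n × n` partially filled array with entries `0,…,k*n-1` each occurring exactly once,
exactly `k` filled cells in each row and each column, and every row sum and column sum
equal to `S`. -/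
def IsMagicWithSum (n k S : ℕ) (M : Fin n → Fin n → Option ℕ) : Prop :=
  (∀ e < k * n, ∃! p : Fin n × Fin n, M p.1 p.2 = some e) ∧
  (∀ i j : Fin n, ∀ e, M i j = some e → e < k * n) ∧
  (∀ i : Fin n, (Finset.univ.filter fun j => (M i j).isSome).card = k) ∧
  (∀ j : Fin n, (Finset.univ.filter fun i => (M i j).isSome).card = k) ∧
  (∀ i : Fin n, ∑ j, (M i j).getD 0 = S) ∧
  (∀ j : Fin n, ∑ i, (M i j).getD 0 = S)

/-- A `k`-magic square of order `n`: some common magic sum works. -/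
def IsKMagic (n k : ℕ) (M : Fin n → Fin n → Option ℕ) : Prop :=
  ∃ S, IsMagicWithSum n k S M

/-- All filled cells lie on `k` consecutive broken diagonals, i.e. there is a shift `d`
such that every filled cell `(i, j)` satisfies `j = (i + d + t) % n` for some `t < k`. -/
def IsKDiagonal (n k : ℕ) (M : Fin n → Fin n → Option ℕ) : Prop :=
  ∃ d : ℕ, ∀ i j : Fin n, (M i j).isSome → ∃ t < k, (j : ℕ) = ((i : ℕ) + d + t) % n

/-- A `k`-diagonal magic square of order `n`. -/
def IsDiagonalMagic (n k : ℕ) (M : Fin n → Fin n → Option ℕ) : Prop :=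
  IsKMagic n k M ∧ IsKDiagonal n k M

namespace SixDiagonal

/-- The predecessor of `j` in the cyclic order of `0, …, n - 1`. -/
def cpred (n j : ℕ) : ℕ := if j = 0 then n - 1 else j - 1

/-- The entry of column `j` on diagonal `t < 6` (the cells `(i, i + t)`, indices modulo `n`). -/
def entry (n t j : ℕ) : ℕ :=
  if t = 0 then 4 * n + j
  else if t = 1 then 2 * n - 1 - cpred n j
  else if t = 2 then 5 * n + j
  else if t = 3 then n - 1 - cpred n j
  else if t = 4 then 4 * n - 1 - 2 * j
  else 2 * n + 2 * cpred n j

/-- The square: the cell `(i, j)` lies on diagonal `j - i` (subtraction in `Fin n`, hence modulo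
`n`), and is filled exactly when that diagonal is one of the first six. -/
def square (n : ℕ) (i j : Fin n) : Option ℕ :=
  if (j - i).val < 6 then some (entry n (j - i).val j.val) else none

lemma entry_lt {n t j : ℕ} (hj : j < n) : entry n t j < 6 * n := by
  unfold entry cpred; split_ifs <;> omega

lemma entry_inj {n t j t' j' : ℕ} (ht : t < 6) (ht' : t' < 6) (hj : j < n) (hj' : j' < n)
    (h : entry n t j = entry n t' j') : t = t' ∧ j = j' := by
  unfold entry cpred at h
  interval_cases t <;> interval_cases t' <;> simp at h ⊢ <;> (try split_ifs at h) <;> omega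

lemma exists_cpred {n p : ℕ} (hp : p < n) : ∃ j < n, cpred n j = p := by
  by_cases h : p = n - 1
  · exact ⟨0, by omega, by simp [cpred, h]⟩
  · exact ⟨p + 1, by omega, by simp [cpred]⟩

lemma entry_surj {n e : ℕ} (he : e < 6 * n) : ∃ t < 6, ∃ j < n, entry n t j = e := by
  by_cases h1 : e < n
  · obtain ⟨j, hj, hp⟩ := exists_cpred (n := n) (p := n - 1 - e) (by omega)
    exact ⟨3, by omega, j, hj, by simp [entry, hp]; omega⟩
  by_cases h2 : e < 2 * n
  · obtain ⟨j, hj, hp⟩ := exists_cpred (n := n) (p := 2 * n - 1 - e) (by omega)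
    exact ⟨1, by omega, j, hj, by simp [entry, hp]; omega⟩
  by_cases h3 : e < 4 * n
  · by_cases h : e % 2 = 0
    · obtain ⟨j, hj, hp⟩ := exists_cpred (n := n) (p := (e - 2 * n) / 2) (by omega)
      exact ⟨5, by omega, j, hj, by simp [entry, hp]; omega⟩
    · exact ⟨4, by omega, (4 * n - 1 - e) / 2, by omega, by simp [entry]; omega⟩
  by_cases h4 : e < 5 * n
  · exact ⟨0, by omega, e - 4 * n, by omega, by simp [entry]; omega⟩
  · exact ⟨2, by omega, e - 5 * n, by omega, by simp [entry]; omega⟩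

lemma sum_entry_col {n j : ℕ} (hj : j < n) :
    ∑ t ∈ Finset.range 6, entry n t j = 18 * n - 3 := by
  simp [Finset.sum_range_succ, entry, cpred]
  split_ifs <;> omega

lemma cpred_succ_mod {n m : ℕ} (hn : 1 < n) : cpred n ((m + 1) % n) = m % n := by
  have h := Nat.mod_lt m (show 0 < n by omega)
  rw [Nat.add_mod_eq_ite, Nat.mod_eq_of_lt hn, cpred]
  by_cases h1 : n ≤ m % n + 1
  · rw [if_pos h1, if_pos (by omega)]
    omega
  · rw [if_neg h1, if_neg (by omega)]
    omega

lemma sum_entry_row {n : ℕ} (hn : 1 < n) (i : ℕ) :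
    ∑ t ∈ Finset.range 6, entry n t ((i + t) % n) = 18 * n - 3 := by
  have h0 := Nat.mod_lt i (show 0 < n by omega)
  have h2 := Nat.mod_lt (i + 2) (show 0 < n by omega)
  have h4 := Nat.mod_lt (i + 4) (show 0 < n by omega)
  have e1 := cpred_succ_mod (m := i) hn
  have e3 := cpred_succ_mod (m := i + 2) hn
  have e5 := cpred_succ_mod (m := i + 4) hn
  simp only [add_assoc, Nat.reduceAdd] at e3 e5
  simp [Finset.sum_range_succ, entry, e1, e3, e5]
  omega

lemma sum_fin_trunc {n : ℕ} (hn : 6 ≤ n) (g : ℕ → ℕ) :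
    ∑ t : Fin n, (if t.val < 6 then g t.val else 0) = ∑ t ∈ Finset.range 6, g t := by
  rw [Fin.sum_univ_eq_sum_range (fun t => if t < 6 then g t else 0) n, ← Finset.sum_filter]
  congr 1
  ext t
  simp only [Finset.mem_filter, Finset.mem_range]
  omega

lemma sum_col {n : ℕ} (hn : 6 ≤ n) (j : Fin n) (g : ℕ → ℕ) :
    ∑ i : Fin n, (if (j - i).val < 6 then g (j - i).val else 0)
      = ∑ t ∈ Finset.range 6, g t := by
  have : NeZero n := ⟨by omega⟩
  rw [← sum_fin_trunc hn g]
  exact Equiv.sum_comp (Equiv.subLeft j) (fun t : Fin n => if t.val < 6 then g t.val else 0)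

lemma val_eq {n : ℕ} (i j : Fin n) : j.val = (i.val + (j - i).val) % n := by
  have : NeZero n := ⟨by have := i.isLt; omega⟩
  rw [← Fin.val_add, add_sub_cancel]

lemma sum_row {n : ℕ} (hn : 6 ≤ n) (i : Fin n) (g : ℕ → ℕ → ℕ) :
    ∑ j : Fin n, (if (j - i).val < 6 then g (j - i).val j.val else 0)
      = ∑ t ∈ Finset.range 6, g t ((i.val + t) % n) := by
  have : NeZero n := ⟨by omega⟩
  rw [← sum_fin_trunc hn (fun t => g t ((i.val + t) % n)),
    ← Equiv.sum_comp (Equiv.subRight i)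
      (fun t : Fin n => if t.val < 6 then g t.val ((i.val + t.val) % n) else 0)]
  refine Finset.sum_congr rfl fun j _ => ?_
  simp only [Equiv.subRight_apply]
  rw [← val_eq i j]

lemma square_isSome {n : ℕ} (i j : Fin n) : (square n i j).isSome ↔ (j - i).val < 6 := by
  unfold square; split_ifs with h <;> simp [h]

lemma square_getD {n : ℕ} (i j : Fin n) :
    (square n i j).getD 0 = if (j - i).val < 6 then entry n (j - i).val j.val else 0 := by
  unfold square; split_ifs <;> rfl

lemma square_eq_some {n e : ℕ} {i j : Fin n} :
    square n i j = some e ↔ (j - i).val < 6 ∧ entry n (j - i).val j.val = e := by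
  unfold square; split_ifs with h <;> simp [h]

end SixDiagonal

open SixDiagonal in
theorem six_diagonal_magic_square (n : ℕ) (hn : 6 ≤ n) :
    ∃ M : Fin n → Fin n → Option ℕ,
      IsMagicWithSum n 6 (18 * n - 3) M ∧ IsKDiagonal n 6 M := by
  have : NeZero n := ⟨by omega⟩
  refine ⟨square n, ⟨?_, ?_, ?_, ?_, ?_, ?_⟩, 0, ?_⟩
  · intro e he
    obtain ⟨t, ht, j, hj, rfl⟩ := entry_surj he
    have hsub : (⟨j, hj⟩ : Fin n) - (⟨j, hj⟩ - ⟨t, by omega⟩) = ⟨t, by omega⟩ :=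
      sub_sub_cancel _ _
    refine ⟨(⟨j, hj⟩ - ⟨t, by omega⟩, ⟨j, hj⟩), ?_, ?_⟩
    · simp only [square_eq_some, hsub]
      exact ⟨ht, trivial⟩
    · rintro ⟨i', j'⟩ h
      simp only [square_eq_some] at h
      obtain ⟨h1, h2⟩ := entry_inj h.1 ht j'.isLt hj h.2
      have hj' : j' = ⟨j, hj⟩ := Fin.ext h2
      have ht' : j' - i' = ⟨t, by omega⟩ := Fin.ext h1
      rw [← hj', ← ht', sub_sub_cancel]
  · intro i j e h
    rw [square_eq_some] at h
    rw [← h.2]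
    exact entry_lt j.isLt
  · intro i
    rw [Finset.card_filter]
    simp only [square_isSome]
    simpa using sum_row hn i (fun _ _ => 1)
  · intro j
    rw [Finset.card_filter]
    simp only [square_isSome]
    simpa using sum_col hn j (fun _ => 1)
  · intro i
    simp only [square_getD]
    rw [sum_row hn i (entry n), sum_entry_row (by omega)]
  · intro j
    simp only [square_getD]
    rw [sum_col hn j (fun t => entry n t j.val), sum_entry_col j.isLt]
  · intro i j h
    exact ⟨_, (square_isSome i j).1 h, val_eq i j⟩
end

section
/- A k-diagonal magic square of order n exists if and only if (n = k = 1) or (3 ≤ k ≤ n and (n is odd or k is even)). -/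
open Finset

/-! ### Necessity -/

/-- The sum of all entries, counted by rows. -/
lemma magic_total {n k S : ℕ} {M : Fin n → Fin n → Option ℕ} (h : IsMagicWithSum n k S M) :
    n * S = ∑ e ∈ range (k * n), e := by
  obtain ⟨h1, h2, -, -, h5, -⟩ := h
  have e1 : n * S = ∑ p : Fin n × Fin n, (M p.1 p.2).getD 0 := by
    rw [Fintype.sum_prod_type]
    simp [h5]
  have e2 : ∑ p : Fin n × Fin n, (M p.1 p.2).getD 0
      = ∑ p ∈ univ.filter (fun p : Fin n × Fin n => (M p.1 p.2).isSome), (M p.1 p.2).getD 0 := by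
    rw [sum_filter]
    refine sum_congr rfl fun p _ => ?_
    cases M p.1 p.2 <;> simp
  rw [e1, e2]
  refine sum_nbij (fun p => (M p.1 p.2).getD 0) ?_ ?_ ?_ (fun _ _ => rfl)
  · intro p hp
    simp only [mem_filter, mem_univ, true_and] at hp
    obtain ⟨e, he⟩ := Option.isSome_iff_exists.1 hp
    simpa [he] using h2 _ _ _ he
  · intro p hp q hq hpq
    simp only [coe_filter, mem_univ, true_and, Set.mem_ofPred_eq] at hp hq
    obtain ⟨e, he⟩ := Option.isSome_iff_exists.1 hp
    obtain ⟨e', he'⟩ := Option.isSome_iff_exists.1 hq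
    simp only [he, he', Option.getD_some] at hpq
    subst hpq
    exact (h1 e (h2 _ _ _ he)).unique he he'
  · intro e he
    obtain ⟨p, hp, -⟩ := h1 e (by simpa using he)
    exact ⟨p, by simp [hp], by simp [hp]⟩

lemma parity {n k S : ℕ} (hn : 1 ≤ n) {M : Fin n → Fin n → Option ℕ}
    (h : IsMagicWithSum n k S M) : Odd n ∨ Even k := by
  have h0 := magic_total h
  have h1 := Finset.sum_range_id_mul_two (k * n)
  rw [← h0] at h1
  have h2 : S * 2 = k * (k * n - 1) := by
    apply Nat.eq_of_mul_eq_mul_left (show 0 < n by omega)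
    rw [← mul_assoc, h1]
    ring
  by_contra hc
  simp only [not_or, Nat.not_odd_iff_even, Nat.not_even_iff_odd] at hc
  obtain ⟨hc1, hc2⟩ := hc
  have h3 : Even (k * n) := hc1.mul_left k
  have h4 : 1 ≤ k * n := Nat.mul_pos hc2.pos hn
  have h5 : Odd (k * n - 1) := Nat.Even.sub_odd h4 h3 odd_one
  have h6 : Odd (S * 2) := h2 ▸ hc2.mul h5
  exact (Nat.not_odd_iff_even.2 (even_two.mul_left S)) h6

/-- A line with a single filled cell sums to the entry of that cell. -/
lemma line_one {n e S : ℕ} {v : Fin n → Option ℕ} {a : Fin n}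
    (hc : (univ.filter fun j => (v j).isSome).card = 1) (hs : ∑ j, (v j).getD 0 = S)
    (ha : v a = some e) : e = S := by
  obtain ⟨b, hb⟩ := card_eq_one.1 hc
  have hz : ∀ j, j ≠ a → v j = none := by
    intro j hj
    by_contra hne
    have hj' : j ∈ ({b} : Finset (Fin n)) := by
      rw [← hb]; simpa [Option.isSome_iff_ne_none] using hne
    have ha' : a ∈ ({b} : Finset (Fin n)) := by rw [← hb]; simp [ha]
    simp only [mem_singleton] at hj' ha'
    exact hj (hj'.trans ha'.symm)
  rw [← hs, sum_eq_single a (fun j _ hj => by simp [hz j hj]) (by simp), ha]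
  rfl

/-- In a line with two filled cells, one of them `0`, the other entry is the line sum. -/
lemma line_two {n S : ℕ} {v : Fin n → Option ℕ} {a : Fin n}
    (hc : (univ.filter fun j => (v j).isSome).card = 2) (hs : ∑ j, (v j).getD 0 = S)
    (ha : v a = some 0) : ∃ b ≠ a, v b = some S := by
  have ha' : a ∈ univ.filter fun j => (v j).isSome := by simp [ha]
  have hc' : ((univ.filter fun j => (v j).isSome).erase a).card = 1 := by
    rw [card_erase_of_mem ha', hc]
  obtain ⟨b, hb⟩ := card_eq_one.1 hc'
  have hb' : b ∈ (univ.filter fun j => (v j).isSome).erase a := by simp [hb]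
  simp only [mem_erase, mem_filter, mem_univ, true_and] at hb'
  obtain ⟨e, he⟩ := Option.isSome_iff_exists.1 hb'.2
  refine ⟨b, hb'.1, ?_⟩
  have hz : ∀ j, j ≠ b → (v j).getD 0 = 0 := by
    intro j hj
    by_cases hja : j = a
    · simp [hja, ha]
    · cases hv : v j with
      | none => rfl
      | some x =>
        have : j ∈ ({b} : Finset (Fin n)) := by rw [← hb]; simp [hja, hv]
        exact absurd (by simpa using this) hj
  rw [← hs, sum_eq_single b (fun j _ hj => hz j hj) (by simp), he]
  rfl

lemma necessity {n k S : ℕ} (hn : 1 ≤ n) (hk : 1 ≤ k) {M : Fin n → Fin n → Option ℕ}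
    (h : IsMagicWithSum n k S M) :
    (n = 1 ∧ k = 1) ∨ (3 ≤ k ∧ k ≤ n ∧ (Odd n ∨ Even k)) := by
  have hp := parity hn h
  obtain ⟨h1, h2, h3, h4, h5, h6⟩ := h
  have hkn : k ≤ n := by
    rw [← h3 ⟨0, hn⟩]
    exact (card_le_univ _).trans (by simp)
  obtain rfl | rfl | hk3 : k = 1 ∨ k = 2 ∨ 3 ≤ k := by omega
  · left
    refine ⟨?_, rfl⟩
    by_contra hne
    -- the entries `0` and `1` would both equal `S`
    obtain ⟨p, hp0, -⟩ := h1 0 (by omega)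
    obtain ⟨q, hq1, -⟩ := h1 1 (by omega)
    have := line_one (h3 p.1) (h5 p.1) hp0
    have := line_one (h3 q.1) (h5 q.1) hq1
    omega
  · exfalso
    obtain ⟨p, hp0, -⟩ := h1 0 (by omega)
    obtain ⟨b, hb, hbS⟩ := line_two (h3 p.1) (h5 p.1) hp0
    obtain ⟨c, hc, hcS⟩ := line_two (v := fun i => M i p.2) (h4 p.2) (h6 p.2) hp0
    have := (h1 S (h2 _ _ _ hbS)).unique (y₁ := (p.1, b)) (y₂ := (c, p.2)) hbS hcS
    simp only [Prod.mk.injEq] at this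
    exact hb this.2
  · exact Or.inr ⟨hk3, hkn, hp⟩

/-! ### Bands of diagonals -/

/-- `HasBand n k`: the `k` broken diagonals `0, …, k-1` of an array with rows and columns indexed by
`ZMod n` can be filled with `0, …, kn-1`, all row and column sums being equal. `F l i` is the entry in
row `i` and column `i + l`. For `k > n` diagonals are allowed to overlap. -/
def HasBand (n k : ℕ) : Prop :=
  ∃ (F : ℕ → ZMod n → ℕ) (S : ℕ),
    (∀ l < k, ∀ i, F l i < k * n) ∧
    (∀ e < k * n, ∃ l < k, ∃ i, F l i = e) ∧
    (∀ i, ∑ l ∈ range k, F l i = S) ∧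
    (∀ j, ∑ l ∈ range k, F l (j - (l : ZMod n)) = S)

lemma HasBand.add {n k k' : ℕ} (h : HasBand n k) (h' : HasBand n k') : HasBand n (k + k') := by
  obtain ⟨F, S, h1, h2, h3, h4⟩ := h
  obtain ⟨F', S', h1', h2', h3', h4'⟩ := h'
  refine ⟨fun l i => if l < k then F l i else k * n + F' (l - k) i, S + (k' * (k * n) + S'),
    ?_, ?_, ?_, ?_⟩
  · intro l hl i
    dsimp only
    rw [add_mul]
    split_ifs with hlk
    · have := h1 l hlk i
      omega
    · have := h1' (l - k) (by omega) i
      omega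
  · intro e he
    rw [add_mul] at he
    by_cases hek : e < k * n
    · obtain ⟨l, hl, i, hi⟩ := h2 e hek
      exact ⟨l, by omega, i, by simp [hl, hi]⟩
    · obtain ⟨l, hl, i, hi⟩ := h2' (e - k * n) (by omega)
      refine ⟨k + l, by omega, i, ?_⟩
      simp only [add_lt_iff_neg_left, not_lt_zero, if_false, add_tsub_cancel_left, hi]
      omega
  · intro i
    rw [sum_range_add]
    congr 1
    · rw [← h3 i]
      exact sum_congr rfl fun l hl => if_pos (mem_range.1 hl)
    · simp [sum_add_distrib, h3' i]
  · intro j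
    rw [sum_range_add]
    congr 1
    · rw [← h4 j]
      exact sum_congr rfl fun l hl => if_pos (mem_range.1 hl)
    · simp [sum_add_distrib, ← h4' (j - k), sub_sub]

/-- It suffices to find permutations `f l` of `{0, …, n-1}` with constant row and column sums: raising
the `l`-th diagonal by `l * n` makes the entries distinct. -/
lemma hasBand_of_perms {n k : ℕ} (hn : 0 < n) (f : ℕ → ZMod n → ℕ) (S : ℕ)
    (h1 : ∀ l < k, ∀ i, f l i < n) (h2 : ∀ l < k, ∀ e < n, ∃ i, f l i = e)
    (h3 : ∀ i, ∑ l ∈ range k, f l i = S)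
    (h4 : ∀ j, ∑ l ∈ range k, f l (j - (l : ZMod n)) = S) : HasBand n k := by
  refine ⟨fun l i => l * n + f l i, (∑ l ∈ range k, l * n) + S, ?_, ?_, ?_, ?_⟩
  · intro l hl i
    have a := h1 l hl i
    have b : (l + 1) * n ≤ k * n := Nat.mul_le_mul_right n hl
    rw [add_mul] at b
    dsimp only
    omega
  · intro e he
    have hl : e / n < k := Nat.div_lt_of_lt_mul (by rwa [mul_comm])
    obtain ⟨i, hi⟩ := h2 _ hl _ (Nat.mod_lt e hn)
    refine ⟨e / n, hl, i, ?_⟩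
    simp only [hi]
    rw [mul_comm]
    exact Nat.div_add_mod e n
  · intro i
    simp [sum_add_distrib, h3 i]
  · intro j
    simp [sum_add_distrib, h4 j]

/-- A band of width `k ≤ n` is a `k`-diagonal magic square. -/
lemma HasBand.exists_magic {n k : ℕ} (hn : 1 ≤ n) (hk : k ≤ n) (h : HasBand n k) :
    ∃ M : Fin n → Fin n → Option ℕ, IsDiagonalMagic n k M := by
  obtain ⟨N, rfl⟩ : ∃ N, n = N + 1 := ⟨n - 1, by omega⟩
  obtain ⟨F, S, h1, h2, h3, h4⟩ := h
  let M : ZMod (N + 1) → ZMod (N + 1) → Option ℕ :=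
    fun i j => if (j - i).val < k then some (F (j - i).val i) else none
  have hval : ∀ l < k, ((l : ZMod (N + 1))).val = l := fun l hl =>
    ZMod.val_cast_of_lt (hl.trans_le hk)
  have key : ∀ G : ℕ → ℕ, ∑ d : ZMod (N + 1), (if d.val < k then G d.val else 0)
      = ∑ l ∈ range k, G l := by
    intro G
    rw [show ∑ d : ZMod (N + 1), (if d.val < k then G d.val else 0)
      = ∑ l ∈ range (N + 1), (if l < k then G l else 0) from
        Fin.sum_univ_eq_sum_range (fun l => if l < k then G l else 0) (N + 1)]
    rw [← sum_filter]
    congr 1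
    ext l
    simp only [mem_filter, mem_range]
    omega
  have row : ∀ (i : ZMod (N + 1)) (H : Option ℕ → ℕ), H none = 0 →
      ∑ j, H (M i j) = ∑ l ∈ range k, H (some (F l i)) := by
    intro i H hH
    rw [← key, ← Equiv.sum_comp (Equiv.addLeft i)]
    refine sum_congr rfl fun d _ => ?_
    simp only [M, Equiv.coe_addLeft, add_sub_cancel_left]
    split_ifs <;> simp [hH]
  have col : ∀ (j : ZMod (N + 1)) (H : Option ℕ → ℕ), H none = 0 →
      ∑ i, H (M i j) = ∑ l ∈ range k, H (some (F l (j - (l : ZMod (N + 1))))) := by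
    intro j H hH
    rw [← key, ← Equiv.sum_comp (Equiv.subLeft j)]
    refine sum_congr rfl fun d _ => ?_
    simp only [M, Equiv.subLeft_apply, sub_sub_cancel, ZMod.natCast_val, ZMod.cast_id', id]
    split_ifs <;> simp [hH]
  have hsurj : Function.Surjective (fun p : Fin k × ZMod (N + 1) =>
      (⟨F p.1 p.2, h1 p.1 p.1.2 p.2⟩ : Fin (k * (N + 1)))) := by
    intro e
    obtain ⟨l, hl, i, hi⟩ := h2 e e.2
    exact ⟨(⟨l, hl⟩, i), Fin.ext hi⟩
  -- `F` is a surjection between sets of the same size `k * n`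
  have hinj := ((Fintype.bijective_iff_surjective_and_card _).2
    ⟨hsurj, by simp [ZMod.card]⟩).injective
  have hM : ∀ i j e, M i j = some e ↔ (j - i).val < k ∧ F (j - i).val i = e := by
    intro i j e
    simp only [M]
    split_ifs with hlt <;> simp [hlt]
  have hcol : ∀ (i j : ZMod (N + 1)) (l : ℕ), (j - i).val = l → j = i + (l : ZMod (N + 1)) := by
    rintro i j _ rfl
    rw [ZMod.natCast_zmod_val, add_sub_cancel]
  have hdiag : ∀ i j : ZMod (N + 1), j.val = (i.val + 0 + (j - i).val) % (N + 1) := by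
    intro i j
    rw [add_zero, ← ZMod.val_add, add_sub_cancel]
  refine ⟨M, ⟨S, ?_, ?_, ?_, ?_, ?_, ?_⟩, 0, ?_⟩
  · intro e he
    obtain ⟨l, hl, i, hi⟩ := h2 e he
    refine ⟨(i, i + (l : ZMod (N + 1))), ?_, ?_⟩
    · refine (hM i (i + (l : ZMod (N + 1))) e).2 ?_
      rw [add_sub_cancel_left, hval l hl]
      exact ⟨hl, hi⟩
    · rintro ⟨a, b⟩ hab
      obtain ⟨hlt, hF⟩ := (hM a b e).1 hab
      have hh := @hinj (⟨_, hlt⟩, a) (⟨l, hl⟩, i) (Fin.ext (hF.trans hi.symm))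
      have hb := hcol a b l (congrArg (fun z => (z.1 : ℕ)) hh)
      obtain rfl : a = i := congrArg Prod.snd hh
      exact Prod.ext rfl hb
  · intro i j e he
    obtain ⟨hlt, rfl⟩ := (hM i j e).1 he
    exact h1 _ hlt _
  · intro i
    rw [card_filter]
    exact (row i (fun o => if o.isSome then 1 else 0) (by simp)).trans (by simp)
  · intro j
    rw [card_filter]
    exact (col j (fun o => if o.isSome then 1 else 0) (by simp)).trans (by simp)
  · intro i
    exact (row i (fun o => o.getD 0) rfl).trans (h3 i)
  · intro j
    exact (col j (fun o => o.getD 0) rfl).trans (h4 j)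
  · intro i j hij
    obtain ⟨e, he⟩ := Option.isSome_iff_exists.1 hij
    obtain ⟨hlt, -⟩ := (hM i j e).1 he
    exact ⟨_, hlt, hdiag i j⟩

/-! ### Bands of width 3, 4 and 5 -/

lemma val_sub_one_cases {n : ℕ} [NeZero n] (x : ZMod n) :
    (x.val = 0 ∧ (x - 1).val = n - 1) ∨ (0 < x.val ∧ (x - 1).val = x.val - 1) := by
  have hlt := ZMod.val_lt x
  have hx : x = ((x.val : ℕ) : ZMod n) := (ZMod.natCast_zmod_val x).symm
  rcases Nat.eq_zero_or_pos x.val with h | h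
  · left
    refine ⟨h, ?_⟩
    have : x - 1 = ((n - 1 : ℕ) : ZMod n) := by
      rw [hx, h, Nat.cast_sub (NeZero.one_le)]
      simp
    rw [this, ZMod.val_cast_of_lt (by omega)]
  · right
    refine ⟨h, ?_⟩
    have : x - 1 = ((x.val - 1 : ℕ) : ZMod n) := by
      rw [Nat.cast_sub h, ← hx]
      simp
    rw [this, ZMod.val_cast_of_lt (by omega)]

/-- For `n` odd, the representative of `x / 2` in `{0, …, n-1}`. -/
def half {n : ℕ} (x : ZMod n) : ℕ := if x.val % 2 = 0 then x.val / 2 else (x.val + n) / 2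

lemma half_lt {n : ℕ} [NeZero n] (x : ZMod n) : half x < n := by
  have := ZMod.val_lt x
  unfold half
  split_ifs <;> omega

lemma half_add_half {n : ℕ} [NeZero n] (hn : n % 2 = 1) (x : ZMod n) :
    half x + half (x - 1) = x.val + (n - 1) / 2 := by
  have := ZMod.val_lt x
  unfold half
  rcases val_sub_one_cases x with ⟨h, h'⟩ | ⟨h, h'⟩ <;> rw [h'] <;> split_ifs <;> omega

lemma val_surj {n : ℕ} (e : ℕ) (he : e < n) : ∃ x : ZMod n, x.val = e :=
  ⟨(e : ZMod n), ZMod.val_cast_of_lt he⟩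

lemma half_surj {n : ℕ} (hn : n % 2 = 1) (e : ℕ) (he : e < n) :
    ∃ x : ZMod n, half x = e := by
  by_cases h : 2 * e < n
  · obtain ⟨x, hx⟩ := val_surj (2 * e) h
    exact ⟨x, by unfold half; rw [hx]; split_ifs <;> omega⟩
  · obtain ⟨x, hx⟩ := val_surj (n := n) (2 * e - n) (by omega)
    exact ⟨x, by unfold half; rw [hx]; split_ifs <;> omega⟩

/-- Surjectivity onto `{0, …, n-1}` is preserved by translating the argument. -/
lemma surj_shift {n : ℕ} {f : ZMod n → ℕ} (h : ∀ e < n, ∃ x, f x = e) (s : ZMod n) :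
    ∀ e < n, ∃ x, f (x + s) = e := by
  intro e he
  obtain ⟨x, hx⟩ := h e he
  exact ⟨x - s, by simpa using hx⟩

/-- Surjectivity onto `{0, …, n-1}` is preserved by complementation. -/
lemma surj_compl {n : ℕ} {f : ZMod n → ℕ} (h : ∀ e < n, ∃ x, f x = e) :
    ∀ e < n, ∃ x, n - 1 - f x = e := by
  intro e he
  obtain ⟨x, hx⟩ := h (n - 1 - e) (by omega)
  exact ⟨x, by omega⟩

lemma hasBand_three {n : ℕ} [NeZero n] (hn : n % 2 = 1) : HasBand n 3 := by
  have hc := fun x : ZMod n => half_lt x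
  have hg := fun x : ZMod n => ZMod.val_lt x
  refine hasBand_of_perms (NeZero.pos n)
    (fun l => match l with
      | 0 => fun i => half (i + -1)
      | 1 => fun i => n - 1 - i.val
      | _ => fun i => half i) (n - 1 + (n - 1) / 2) ?_ ?_ ?_ ?_
  · intro l hl i
    have := hg i
    interval_cases l
    · exact hc _
    · simp only; omega
    · exact hc _
  · intro l hl
    interval_cases l
    · exact surj_shift (half_surj hn) _
    · exact surj_compl val_surj
    · exact half_surj hn
  · intro i
    have h1 := half_add_half hn i
    have := hg i
    simp only [sum_range_succ, sum_range_zero, ← sub_eq_add_neg]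
    omega
  · intro j
    have h1 := half_add_half hn (j - 1)
    have := hg (j - 1)
    have e1 : j - 1 - 1 = j - 2 := by ring
    rw [e1] at h1
    simp only [sum_range_succ, sum_range_zero, ← sub_eq_add_neg]
    push_cast
    simp only [sub_zero]
    omega

lemma hasBand_four {n : ℕ} [NeZero n] : HasBand n 4 := by
  have hg := fun x : ZMod n => ZMod.val_lt x
  refine hasBand_of_perms (NeZero.pos n)
    (fun l => match l with
      | 0 => fun i => i.val
      | 1 => fun i => n - 1 - i.val
      | 2 => fun i => n - 1 - (i + 2).val
      | _ => fun i => (i + 2).val) (2 * (n - 1)) ?_ ?_ ?_ ?_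
  · intro l hl i
    have := hg i
    have := hg (i + 2)
    interval_cases l <;> simp only <;> omega
  · intro l hl
    interval_cases l
    · exact val_surj
    · exact surj_compl val_surj
    · exact surj_compl (surj_shift val_surj 2)
    · exact surj_shift val_surj 2
  · intro i
    have := hg i
    have := hg (i + 2)
    simp only [sum_range_succ, sum_range_zero]
    omega
  · intro j
    have := hg j
    have := hg (j - 1)
    have e1 : j - 3 + 2 = j - 1 := by ring
    simp only [sum_range_succ, sum_range_zero]
    push_cast
    simp only [sub_zero, sub_add_cancel, e1]
    omega

lemma hasBand_five {n : ℕ} [NeZero n] (hn : n % 2 = 1) : HasBand n 5 := by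
  have hc := fun x : ZMod n => half_lt x
  have hg := fun x : ZMod n => ZMod.val_lt x
  refine hasBand_of_perms (NeZero.pos n)
    (fun l => match l with
      | 0 => fun i => i.val
      | 1 => fun i => n - 1 - half (i + 1)
      | 2 => fun i => n - 1 - i.val
      | 3 => fun i => n - 1 - half (i + 2)
      | _ => fun i => (i + 2).val) (3 * (n - 1) - (n - 1) / 2) ?_ ?_ ?_ ?_
  · intro l hl i
    have := hg i
    have := hg (i + 2)
    interval_cases l <;> simp only <;> omega
  · intro l hl
    interval_cases l
    · exact val_surj
    · exact surj_compl (surj_shift (half_surj hn) 1)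
    · exact surj_compl val_surj
    · exact surj_compl (surj_shift (half_surj hn) 2)
    · exact surj_shift val_surj 2
  · intro i
    have h1 := half_add_half hn (i + 2)
    have := hg i
    have := hg (i + 2)
    have := hc (i + 1)
    have := hc (i + 2)
    have e1 : i + 2 - 1 = i + 1 := by ring
    rw [e1] at h1
    simp only [sum_range_succ, sum_range_zero]
    omega
  · intro j
    have h1 := half_add_half hn j
    have := hg j
    have := hg (j - 2)
    have := hc j
    have := hc (j - 1)
    have e1 : j - 3 + 2 = j - 1 := by ring
    have e2 : j - 4 + 2 = j - 2 := by ring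
    simp only [sum_range_succ, sum_range_zero]
    push_cast
    simp only [sub_zero, sub_add_cancel, e1, e2]
    omega

/-! ### Bands of width 6 -/

/-- A band of width `6` from `n` triples of constant sum `T` with exactly one member in each pair
`{x, 6n-1-x}`. -/
lemma hasBand_six_of_triples {n : ℕ} (p q r : ZMod n → ℕ) (T : ℕ)
    (hp : ∀ i, p i < 6 * n) (hq : ∀ i, q i < 6 * n) (hr : ∀ i, r i < 6 * n)
    (hT : ∀ i, p i + q i + r i = T)
    (hsurj : ∀ e < 6 * n, ∃ i, p i = e ∨ q i = e ∨ r i = e ∨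
      6 * n - 1 - p i = e ∨ 6 * n - 1 - q i = e ∨ 6 * n - 1 - r i = e) : HasBand n 6 := by
  refine ⟨fun l => match l with
      | 0 => fun i => p i
      | 1 => fun i => 6 * n - 1 - p i
      | 2 => fun i => q (i + 2)
      | 3 => fun i => 6 * n - 1 - q (i + 2)
      | 4 => fun i => r (i + 4)
      | _ => fun i => 6 * n - 1 - r (i + 4), 3 * (6 * n - 1), ?_, ?_, ?_, ?_⟩
  · intro l hl i
    have := hp i
    have := hq (i + 2)
    have := hr (i + 4)
    interval_cases l <;> simp only <;> omega
  · intro e he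
    obtain ⟨i, h | h | h | h | h | h⟩ := hsurj e he
    · exact ⟨0, by norm_num, i, h⟩
    · exact ⟨2, by norm_num, i - 2, by simpa using h⟩
    · exact ⟨4, by norm_num, i - 4, by simpa using h⟩
    · exact ⟨1, by norm_num, i, h⟩
    · exact ⟨3, by norm_num, i - 2, by simpa using h⟩
    · exact ⟨5, by norm_num, i - 4, by simpa using h⟩
  · intro i
    have := hp i
    have := hq (i + 2)
    have := hr (i + 4)
    simp only [sum_range_succ, sum_range_zero]
    omega
  · intro j
    have := hT j
    have := hT (j - 1)
    have := hp (j - 1)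
    have := hq (j - 1)
    have := hr (j - 1)
    have e1 : j - 3 + 2 = j - 1 := by ring
    have e2 : j - 5 + 4 = j - 1 := by ring
    simp only [sum_range_succ, sum_range_zero]
    push_cast
    simp only [sub_zero, sub_add_cancel, e1, e2]
    omega

/-- Label the pair `{3n-1-u, 3n+u}` by `u`. For `n = 2m`, the nested pairs
`{n+m-1-t, n+m+t}` and `{2n+m-1-t, 2n+m+t}`, `t < m`, exhaust the labels `n, …, 3n-1`, and both have
difference `2t+1`. Hence the labels split into triples `(u, v, w)` with `w = u + v + 1` for `u = 2t`
and with `w = u + v` for `u = 2t+1`. Choosing the member of each pair by a suitable sign gives triples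
of sum `9n-1`. -/
lemma hasBand_six {n : ℕ} [NeZero n] (hn : n % 2 = 0) : HasBand n 6 := by
  obtain ⟨m, rfl⟩ : ∃ m, n = 2 * m := ⟨n / 2, by omega⟩
  have hg := fun x : ZMod (2 * m) => ZMod.val_lt x
  refine hasBand_six_of_triples
    (fun i => if i.val % 2 = 0 then 6 * m - 1 - i.val else 6 * m + i.val)
    (fun i => if i.val % 2 = 0 then 3 * m + i.val / 2 else 11 * m - 1 - i.val / 2)
    (fun i => if i.val % 2 = 0 then 9 * m + i.val / 2 else m - 1 - i.val / 2)
    (18 * m - 1) ?_ ?_ ?_ ?_ ?_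
  · intro i
    have := hg i
    split_ifs <;> omega
  · intro i
    have := hg i
    split_ifs <;> omega
  · intro i
    have := hg i
    split_ifs <;> omega
  · intro i
    have := hg i
    split_ifs <;> omega
  · intro e he
    -- in each range of `e`, the index of the triple that contains `e` or its complement
    obtain h | h | h | h | h | h | h | h | h | h :
        e < m ∨
        (m ≤ e ∧ e < 2 * m) ∨
        (2 * m ≤ e ∧ e < 3 * m) ∨
        (3 * m ≤ e ∧ e < 4 * m) ∨
        (4 * m ≤ e ∧ e < 6 * m) ∨
        (6 * m ≤ e ∧ e < 8 * m) ∨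
        (8 * m ≤ e ∧ e < 9 * m) ∨
        (9 * m ≤ e ∧ e < 10 * m) ∨
        (10 * m ≤ e ∧ e < 11 * m) ∨
        11 * m ≤ e := by omega
    · obtain ⟨i, hi⟩ := val_surj (n := 2 * m) (2 * (m - 1 - e) + 1) (by omega)
      refine ⟨i, ?_⟩
      simp only [hi]
      split_ifs <;> omega
    · obtain ⟨i, hi⟩ := val_surj (n := 2 * m) (2 * (e - m) + 1) (by omega)
      refine ⟨i, ?_⟩
      simp only [hi]
      split_ifs <;> omega
    · obtain ⟨i, hi⟩ := val_surj (n := 2 * m) (2 * (3 * m - 1 - e)) (by omega)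
      refine ⟨i, ?_⟩
      simp only [hi]
      split_ifs <;> omega
    · obtain ⟨i, hi⟩ := val_surj (n := 2 * m) (2 * (e - 3 * m)) (by omega)
      refine ⟨i, ?_⟩
      simp only [hi]
      split_ifs <;> omega
    · obtain ⟨i, hi⟩ := val_surj (n := 2 * m) (6 * m - 1 - e) (by omega)
      refine ⟨i, ?_⟩
      simp only [hi]
      split_ifs <;> omega
    · obtain ⟨i, hi⟩ := val_surj (n := 2 * m) (e - 6 * m) (by omega)
      refine ⟨i, ?_⟩
      simp only [hi]
      split_ifs <;> omega
    · obtain ⟨i, hi⟩ := val_surj (n := 2 * m) (2 * (9 * m - 1 - e)) (by omega)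
      refine ⟨i, ?_⟩
      simp only [hi]
      split_ifs <;> omega
    · obtain ⟨i, hi⟩ := val_surj (n := 2 * m) (2 * (e - 9 * m)) (by omega)
      refine ⟨i, ?_⟩
      simp only [hi]
      split_ifs <;> omega
    · obtain ⟨i, hi⟩ := val_surj (n := 2 * m) (2 * (11 * m - 1 - e) + 1) (by omega)
      refine ⟨i, ?_⟩
      simp only [hi]
      split_ifs <;> omega
    · obtain ⟨i, hi⟩ := val_surj (n := 2 * m) (2 * (e - 11 * m) + 1) (by omega)
      refine ⟨i, ?_⟩
      simp only [hi]
      split_ifs <;> omega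

/-! ### Assembly -/

lemma hasBand_of_odd {n : ℕ} [NeZero n] (hn : n % 2 = 1) (k : ℕ) (hk : 3 ≤ k) : HasBand n k := by
  induction k using Nat.strong_induction_on with
  | _ k ih =>
    obtain rfl | rfl | rfl | h : k = 3 ∨ k = 4 ∨ k = 5 ∨ 6 ≤ k := by omega
    · exact hasBand_three hn
    · exact hasBand_four
    · exact hasBand_five hn
    · have := (hasBand_three hn).add (ih (k - 3) (by omega) (by omega))
      rwa [show 3 + (k - 3) = k by omega] at this

lemma hasBand_of_even {n : ℕ} [NeZero n] (hn : n % 2 = 0) (k : ℕ) (hk : 3 ≤ k) (hk' : k % 2 = 0) :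
    HasBand n k := by
  induction k using Nat.strong_induction_on with
  | _ k ih =>
    obtain rfl | rfl | h : k = 4 ∨ k = 6 ∨ 8 ≤ k := by omega
    · exact hasBand_four
    · exact hasBand_six hn
    · have := (hasBand_four (n := n)).add (ih (k - 4) (by omega) (by omega) (by omega))
      rwa [show 4 + (k - 4) = k by omega] at this

theorem diagonal_magic_iff (n k : ℕ) (hn : 1 ≤ n) (hk : 1 ≤ k) :
    (∃ M : Fin n → Fin n → Option ℕ, IsDiagonalMagic n k M) ↔
      (n = 1 ∧ k = 1) ∨ (3 ≤ k ∧ k ≤ n ∧ (Odd n ∨ Even k)) := by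
  have : NeZero n := ⟨by omega⟩
  constructor
  · rintro ⟨M, ⟨S, hM⟩, -⟩
    exact necessity hn hk hM
  · rintro (⟨rfl, rfl⟩ | ⟨hk3, hkn, hpar⟩)
    · refine HasBand.exists_magic le_rfl le_rfl ⟨fun _ _ => 0, 0, ?_, ?_, ?_, ?_⟩
      · simp
      · intro e he
        exact ⟨0, by norm_num, 0, by simp at he; exact he.symm⟩
      · simp
      · simp
    · refine HasBand.exists_magic hn hkn ?_
      rcases Nat.mod_two_eq_zero_or_one n with h | h
      · refine hasBand_of_even h k hk3 ?_
        rcases hpar with ho | he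
        · rw [Nat.odd_iff] at ho
          omega
        · exact Nat.even_iff.1 he
      · exact hasBand_of_odd h k hk3
end
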